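/- Let t ∈ ℝ with t ≠ 0. Then the set { x ∈ ℝ : x > 0 and K_{it}(x) = 0 } is infinite; that is, for purely imaginary order the Macdonald function has infinitely many zeros on the positive real semiaxis. -/

import Mathlib

open Complex Asymptotics

/-- The entire series `∑ (z²/4)^k / (k! (a)_k)` appearing in the ascending expansion
of the Macdonald function (with `a = 1 ∓ ν`). -/
noncomputable def macdonaldS (a z : ℂ) : ℂ :=
  ∑' k : ℕ, (z ^ 2 / 4) ^ k / ((k.factorial : ℂ) * (ascPochhammer ℂ k).eval a)

/-- The Macdonald function `K_ν(z)` defined by its ascending series, for `ν` not an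
integer and `z` off the cut `(-∞, 0]`, with principal complex powers. -/
noncomputable def macdonaldK (ν z : ℂ) : ℂ :=
  ((Real.pi : ℂ) / 2) / Complex.sin (ν * (Real.pi : ℂ)) *
    ((z / 2) ^ (-ν) / Complex.Gamma (1 - ν) * macdonaldS (1 - ν) z -
     (z / 2) ^ ν / Complex.Gamma (1 + ν) * macdonaldS (1 + ν) z)

lemma osc_zero (g : ℝ → ℂ) (hg : Continuous g) (c : ℂ) (hc : c ≠ 0)
    (hl : Filter.Tendsto g Filter.atTop (nhds c)) :
    {u : ℝ | (Complex.exp (u * I) * g u).im = 0}.Infinite := by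
  apply Set.infinite_of_not_bddAbove
  rintro ⟨N, hN⟩
  have hr : 0 < ‖c‖ := norm_pos_iff.mpr hc
  obtain ⟨M, hM⟩ := Filter.eventually_atTop.mp ((Metric.tendsto_nhds.mp hl) ‖c‖ hr)
  obtain ⟨n, hn⟩ := exists_nat_gt (max M N - (Real.pi / 2 - arg c))
  have hpi := Real.pi_gt_three
  set u1 : ℝ := Real.pi / 2 - arg c + n * (2 * Real.pi) with hu1
  have hn0 : (0 : ℝ) ≤ n := Nat.cast_nonneg n
  have hbig : max M N < u1 := by nlinarith
  have hMu : M < u1 := lt_of_le_of_lt (le_max_left _ _) hbig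
  have hNu : N < u1 := lt_of_le_of_lt (le_max_right _ _) hbig
  have e1 : Complex.exp (u1 * I) * c = ‖c‖ * I := by
    conv_lhs => rw [← Complex.norm_mul_exp_arg_mul_I c]
    have : Complex.exp (u1 * I) * (‖c‖ * Complex.exp (arg c * I))
        = ‖c‖ * Complex.exp (Real.pi / 2 * I + n * (2 * Real.pi * I)) := by
      rw [mul_left_comm, ← Complex.exp_add]
      congr 2
      rw [hu1]; push_cast; ring
    rw [this, Complex.exp_periodic.nat_mul n, Complex.exp_pi_div_two_mul_I]
  have e2 : Complex.exp ((u1 + Real.pi : ℝ) * I) * c = -(‖c‖ * I) := by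
    rw [← e1]; push_cast
    rw [add_mul, Complex.exp_add, Complex.exp_pi_mul_I]; ring
  have key : ∀ u : ℝ, M ≤ u →
      |(Complex.exp (u * I) * g u).im - (Complex.exp (u * I) * c).im| < ‖c‖ := by
    intro u hu
    rw [← Complex.sub_im, ← mul_sub]
    refine lt_of_le_of_lt (Complex.abs_im_le_norm _) ?_
    rw [norm_mul, Complex.norm_exp_ofReal_mul_I, one_mul, ← dist_eq_norm]
    exact hM u hu
  have k1 := key u1 hMu.le
  have k2 := key (u1 + Real.pi) (by linarith)
  rw [e1] at k1
  rw [e2] at k2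
  have i1 : ((‖c‖ : ℂ) * I).im = ‖c‖ := by simp
  have i2 : (-((‖c‖ : ℂ) * I)).im = -‖c‖ := by simp
  rw [i1] at k1
  rw [i2] at k2
  rw [abs_lt] at k1 k2
  have hcont : Continuous (fun u : ℝ => (Complex.exp (u * I) * g u).im) := by fun_prop
  obtain ⟨u, hu, hu0⟩ := intermediate_value_Icc' (by linarith : u1 ≤ u1 + Real.pi)
    hcont.continuousOn (show (0 : ℝ) ∈ _ from ⟨by linarith [k2.2], by linarith [k1.1]⟩)
  have := hN (show u ∈ _ from hu0)
  linarith [hu.1]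

lemma poch_norm (t : ℝ) (k : ℕ) : 1 ≤ ‖(ascPochhammer ℂ k).eval (1 + t * I)‖ := by
  induction k with
  | zero => simp
  | succ k ih =>
    rw [ascPochhammer_succ_eval, norm_mul]
    have : 1 ≤ ‖(1 + t * I + k : ℂ)‖ := by
      refine le_trans ?_ (Complex.abs_re_le_norm _)
      refine le_trans ?_ (le_abs_self _)
      simp
    nlinarith

lemma S_cont (t : ℝ) : Continuous (macdonaldS (1 + t * I)) := by
  rw [continuous_iff_continuousAt]
  intro z
  have h : ContinuousOn (macdonaldS (1 + t * I)) (Metric.ball 0 (‖z‖ + 1)) := by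
    unfold macdonaldS
    refine continuousOn_tsum (u := fun k : ℕ => ((‖z‖ + 1) ^ 2 / 4) ^ k / (k.factorial : ℝ))
      (fun k => by fun_prop) (Real.summable_pow_div_factorial _) ?_
    intro k w hw
    have hw' : ‖w‖ ≤ ‖z‖ + 1 := by
      have := Metric.mem_ball.mp hw
      rw [dist_zero_right] at this
      exact this.le
    simp only [norm_div, norm_mul, norm_pow, Complex.norm_natCast]
    have h4 : ‖(4 : ℂ)‖ = 4 := by simp
    rw [h4]
    have hf : (0 : ℝ) < k.factorial := by positivity
    gcongr
    exact le_mul_of_one_le_right hf.le (poch_norm t k)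
  exact h.continuousAt (Metric.isOpen_ball.mem_nhds (by simp))

lemma S_zero (a : ℂ) : macdonaldS a 0 = 1 := by
  unfold macdonaldS
  rw [tsum_eq_single 0]
  · simp
  · intro k hk; simp [hk]

lemma S_conj (a : ℂ) (x : ℝ) :
    (starRingEnd ℂ) (macdonaldS a x) = macdonaldS ((starRingEnd ℂ) a) x := by
  unfold macdonaldS
  rw [Complex.conj_tsum]
  congr 1; ext k
  have hp : ∀ k : ℕ, (starRingEnd ℂ) ((ascPochhammer ℂ k).eval a)
      = (ascPochhammer ℂ k).eval ((starRingEnd ℂ) a) := by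
    intro k
    induction k with
    | zero => simp
    | succ k ih => rw [ascPochhammer_succ_eval, ascPochhammer_succ_eval, map_mul, ih]; simp
  have h4 : (starRingEnd ℂ) 4 = 4 := Complex.conj_ofNat 4
  simp [hp, h4]

lemma K_neg (ν z : ℂ) : macdonaldK (-ν) z = macdonaldK ν z := by
  unfold macdonaldK
  rw [neg_mul, Complex.sin_neg, neg_neg, sub_neg_eq_add, ← sub_eq_add_neg, div_neg]
  ring

lemma zeros_pos (t : ℝ) (ht : 0 < t) :
    {x : ℝ | 0 < x ∧ macdonaldK ((t : ℂ) * Complex.I) (x : ℂ) = 0}.Infinite := by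
  set X : ℝ → ℝ := fun u => 2 * Real.exp (-u / t) with hX
  have hconj : (starRingEnd ℂ) (1 + ((-t : ℝ) : ℂ) * I) = 1 + t * I := by simp
  have hΓ : Complex.Gamma (1 + ((-t : ℝ) : ℂ) * I) ≠ 0 :=
    Complex.Gamma_ne_zero_of_re_pos (by simp)
  set g : ℝ → ℂ := fun u => macdonaldS (1 + ((-t : ℝ) : ℂ) * I) (X u) /
    Complex.Gamma (1 + ((-t : ℝ) : ℂ) * I) with hgdef
  have hXl : Filter.Tendsto X Filter.atTop (nhds 0) := by
    have h1 : Filter.Tendsto (fun u : ℝ => -u / t) Filter.atTop Filter.atBot :=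
      Filter.Tendsto.atBot_div_const ht Filter.tendsto_neg_atTop_atBot
    simpa using (Real.tendsto_exp_atBot.comp h1).const_mul 2
  have hXc : Continuous X := by fun_prop
  have hS := S_cont (-t)
  have hg : Continuous g := by
    have : Continuous (fun u => macdonaldS (1 + ((-t : ℝ) : ℂ) * I) (X u)) :=
      hS.comp (Complex.continuous_ofReal.comp hXc)
    exact this.div_const _
  have hl : Filter.Tendsto g Filter.atTop (nhds (1 / Complex.Gamma (1 + ((-t : ℝ) : ℂ) * I))) := by
    have h1 : Filter.Tendsto (fun u => ((X u : ℝ) : ℂ)) Filter.atTop (nhds 0) := by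
      have h0 := (Complex.continuous_ofReal.tendsto 0).comp hXl
      rw [Complex.ofReal_zero] at h0
      exact h0
    have h2 := (hS.tendsto 0).comp h1
    rw [S_zero] at h2
    exact h2.div_const _
  have hinf := osc_zero g hg _ (one_div_ne_zero hΓ) hl
  have hinj : Function.Injective X := by
    intro a b hab
    have h1 := Real.exp_injective (mul_left_cancel₀ two_ne_zero hab)
    field_simp at h1
    linarith
  refine (hinf.image hinj.injOn).mono ?_
  rintro _ ⟨u, hu, rfl⟩
  refine ⟨by positivity, ?_⟩
  have hx2 : ((X u : ℝ) : ℂ) / 2 = Complex.exp ((-u / t : ℝ) : ℂ) := by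
    rw [hX]; push_cast; ring
  have ht' : (t : ℂ) ≠ 0 := by exact_mod_cast ht.ne'
  have hlog : Complex.log (Complex.exp ((-u / t : ℝ) : ℂ)) = ((-u / t : ℝ) : ℂ) := by
    rw [← Complex.ofReal_exp, ← Complex.ofReal_log (Real.exp_pos _).le, Real.log_exp]
  have hp1 : (((X u : ℝ) : ℂ) / 2) ^ (-((t : ℂ) * I)) = Complex.exp (u * I) := by
    rw [hx2, Complex.cpow_def_of_ne_zero (Complex.exp_ne_zero _), hlog]
    congr 1; push_cast; field_simp
  have hp2 : (((X u : ℝ) : ℂ) / 2) ^ ((t : ℂ) * I) = (starRingEnd ℂ) (Complex.exp (u * I)) := by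
    rw [hx2, Complex.cpow_def_of_ne_zero (Complex.exp_ne_zero _), hlog, ← Complex.exp_conj]
    congr 1; simp; field_simp
  have ha : (1 - (t : ℂ) * I) = 1 + ((-t : ℝ) : ℂ) * I := by push_cast; ring
  have e1 : (((X u : ℝ) : ℂ) / 2) ^ (-((t : ℂ) * I)) / Complex.Gamma (1 - t * I) *
      macdonaldS (1 - t * I) (X u) = Complex.exp (u * I) * g u := by
    rw [hp1, ha, hgdef]; ring
  have e2 : (((X u : ℝ) : ℂ) / 2) ^ ((t : ℂ) * I) / Complex.Gamma (1 + t * I) *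
      macdonaldS (1 + t * I) (X u) = (starRingEnd ℂ) (Complex.exp (u * I) * g u) := by
    rw [hp2, map_mul, hgdef]
    simp only [map_div₀]
    rw [S_conj, ← Complex.Gamma_conj, hconj]; ring
  unfold macdonaldK
  rw [e1, e2, Complex.conj_eq_iff_im.mpr hu]
  simp

/-- For purely imaginary order, the Macdonald function has infinitely many zeros on the
positive real semiaxis. -/
theorem macdonaldK_imaginary_order_zeros_infinite (t : ℝ) (ht : t ≠ 0) :
    {x : ℝ | 0 < x ∧ macdonaldK ((t : ℂ) * Complex.I) (x : ℂ) = 0}.Infinite := by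
  rcases lt_or_gt_of_ne ht with h | h
  · have := zeros_pos (-t) (by linarith)
    simpa [K_neg] using this
  · exact zeros_pos t h
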